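/- Let h > 0 and α > 0, and suppose the complex number z satisfies the resonance equation h^(−α)·exp(2iz/h) − h^(−α) + 2iz/h = 0 and Re z ≠ 0. Then, writing a = Re z and b = Im z, one has 0 ≤ −4b/h − ln(4a²·h^(2α−2)) ≤ (4b² + 4b·h^(1−α) + h^(2−2α)) / (4a²). -/

import Mathlib

open Complex Real

/-!
Put `w = 2iz/h` and `c = h ^ (-α)`, so that the resonance equation reads `c * exp w = c - w`. Taking
squared norms gives `c² exp (2 Re w) = (Re (c - w))² + (Im (c - w))²`. Hence the quantity to be
bounded is `log (x + y) - log y = log (1 + x / y)` with `x = (Re (c - w))²` and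
`y = (Im (c - w))²`, and this lies between `0` and `x / y`.
-/

theorem log_add_sub_log_mem_Icc {x y : ℝ} (hx : 0 ≤ x) (hy : 0 < y) :
    Real.log (x + y) - Real.log y ∈ Set.Icc 0 (x / y) := by
  have hxy : 0 < x + y := by positivity
  constructor
  · exact sub_nonneg.2 (Real.log_le_log hy (le_add_of_nonneg_left hx))
  · calc Real.log (x + y) - Real.log y = Real.log ((x + y) / y) :=
          (Real.log_div hxy.ne' hy.ne').symm
      _ ≤ (x + y) / y - 1 := Real.log_le_sub_one_of_pos (by positivity)
      _ = x / y := by rw [add_div, div_self hy.ne', add_sub_cancel_right]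

theorem normSq_mul_exp_two_mul_re_eq {c w : ℂ} (hw : c * Complex.exp w = c - w) :
    normSq c * Real.exp (2 * w.re) = (c - w).re ^ 2 + (c - w).im ^ 2 := by
  have normSq_exp : normSq (Complex.exp w) = Real.exp (2 * w.re) := by
    rw [normSq_eq_norm_sq, Complex.norm_exp, ← Real.exp_nat_mul, Nat.cast_ofNat]
  rw [← normSq_exp, ← normSq_mul, hw, normSq_apply, sq, sq]

theorem two_mul_re_sub_log_mem_Icc {c w : ℂ} (hw : c * Complex.exp w = c - w)
    (him : (c - w).im ≠ 0) :
    2 * w.re - Real.log ((c - w).im ^ 2 / normSq c) ∈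
      Set.Icc 0 ((c - w).re ^ 2 / (c - w).im ^ 2) := by
  have hc : normSq c ≠ 0 := by
    rw [Ne, normSq_eq_zero]
    rintro rfl
    exact him (by rw [← hw, zero_mul, zero_im])
  have log_modulus : Real.log (normSq c) + 2 * w.re =
      Real.log ((c - w).re ^ 2 + (c - w).im ^ 2) := by
    rw [← normSq_mul_exp_two_mul_re_eq hw, Real.log_mul hc (Real.exp_ne_zero _), Real.log_exp]
  have log_quotient := Real.log_div (pow_ne_zero 2 him) hc
  have two_mul_re_sub_log : 2 * w.re - Real.log ((c - w).im ^ 2 / normSq c) =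
      Real.log ((c - w).re ^ 2 + (c - w).im ^ 2) - Real.log ((c - w).im ^ 2) := by
    linarith
  rw [two_mul_re_sub_log]
  exact log_add_sub_log_mem_Icc (sq_nonneg _) (by positivity)

theorem resonance_log_mem_Icc {h c : ℝ} (hh : h ≠ 0) {z : ℂ}
    (hres : (c : ℂ) * Complex.exp (2 * I * z / h) - c + 2 * I * z / h = 0) (hre : z.re ≠ 0) :
    -(4 * z.im) / h - Real.log (4 * z.re ^ 2 / (h * c) ^ 2) ∈
      Set.Icc 0 ((2 * z.im + h * c) ^ 2 / (4 * z.re ^ 2)) := by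
  set w : ℂ := 2 * I * z / h with hw
  have w_re : w.re = -(2 * z.im) / h := by simp [hw, div_ofReal_re]
  have w_im : w.im = 2 * z.re / h := by simp [hw, div_ofReal_im]
  have sub_re : (c - w).re = (2 * z.im + h * c) / h := by
    rw [Complex.sub_re, ofReal_re, w_re]
    field_simp
    ring
  have sub_im : (c - w).im = -(2 * z.re / h) := by
    rw [Complex.sub_im, ofReal_im, w_im, zero_sub]
  have him : (c - w).im ≠ 0 := by
    rw [sub_im]
    exact neg_ne_zero.2 (by positivity)
  have bounds := two_mul_re_sub_log_mem_Icc (c := c) (w := w) (by linear_combination hres) him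
  have two_mul_w_re : 2 * w.re = -(4 * z.im) / h := by
    rw [w_re]
    ring
  have log_argument : (c - w).im ^ 2 / normSq c = 4 * z.re ^ 2 / (h * c) ^ 2 := by
    rw [sub_im, normSq_ofReal]
    ring
  have upper_bound : (c - w).re ^ 2 / (c - w).im ^ 2 =
      (2 * z.im + h * c) ^ 2 / (4 * z.re ^ 2) := by
    rw [sub_re, sub_im]
    field_simp
    ring
  rwa [two_mul_w_re, log_argument, upper_bound] at bounds

theorem resonance_log_inequality_general (h α : ℝ) (hh : 0 < h) (z : ℂ)
    (hres : ((h ^ (-α) : ℝ) : ℂ) * Complex.exp (2 * Complex.I * z / (h : ℂ))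
        - ((h ^ (-α) : ℝ) : ℂ) + 2 * Complex.I * z / (h : ℂ) = 0)
    (hre : z.re ≠ 0) :
    0 ≤ -(4 * z.im) / h - Real.log (4 * z.re ^ 2 * h ^ (2 * α - 2)) ∧
      -(4 * z.im) / h - Real.log (4 * z.re ^ 2 * h ^ (2 * α - 2))
        ≤ (4 * z.im ^ 2 + 4 * z.im * h ^ (1 - α) + h ^ (2 - 2 * α)) / (4 * z.re ^ 2) := by
  have rpow_one_sub : h ^ (1 - α) = h * h ^ (-α) := by
    rw [sub_eq_add_neg, Real.rpow_add hh, Real.rpow_one]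
  have rpow_two_sub : h ^ (2 - 2 * α) = (h * h ^ (-α)) ^ 2 := by
    rw [← rpow_one_sub, ← Real.rpow_mul_natCast hh.le]
    congr 1
    push_cast
    ring
  have rpow_sub_two : h ^ (2 * α - 2) = ((h * h ^ (-α)) ^ 2)⁻¹ := by
    rw [← rpow_two_sub, ← Real.rpow_neg hh.le, neg_sub]
  have complete_square : 4 * z.im ^ 2 + 4 * z.im * h ^ (1 - α) + h ^ (2 - 2 * α) =
      (2 * z.im + h * h ^ (-α)) ^ 2 := by
    rw [rpow_one_sub, rpow_two_sub]
    ring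
  rw [complete_square, rpow_sub_two, ← div_eq_mul_inv]
  exact resonance_log_mem_Icc hh.ne' hres hre

theorem resonance_log_inequality (h α : ℝ) (hh : 0 < h) (hα : 0 < α) (z : ℂ)
    (hres : ((h ^ (-α) : ℝ) : ℂ) * Complex.exp (2 * Complex.I * z / (h : ℂ))
        - ((h ^ (-α) : ℝ) : ℂ) + 2 * Complex.I * z / (h : ℂ) = 0)
    (hre : z.re ≠ 0) :
    0 ≤ -(4 * z.im) / h - Real.log (4 * z.re ^ 2 * h ^ (2 * α - 2)) ∧
      -(4 * z.im) / h - Real.log (4 * z.re ^ 2 * h ^ (2 * α - 2))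
        ≤ (4 * z.im ^ 2 + 4 * z.im * h ^ (1 - α) + h ^ (2 - 2 * α)) / (4 * z.re ^ 2) :=
  resonance_log_inequality_general h α hh z hres hre
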